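/- For m ≥ n ≥ 4, B(P_n □ P_m) = 5, i.e., every n × m grid graph with both n, m ≥ 4 has bodyguard number 5. -/

import Mathlib

open SimpleGraph

/-- A token may stay in place or move along an edge. -/
def stepRel {V : Type*} (G : SimpleGraph V) (x y : V) : Prop := x = y ∨ G.Adj x y

/-- The sequence of positions in the pursuit game: `(gamePlay ...) n` is the pair
(pursuer positions, evader position) after `n` full rounds; at time `0` the pursuers
have been placed (`binit`) and then the evader placed (`pinit binit`). In each round,
the pursuers move first (via `bmove`, seeing the current state), then the evader moves
(via `pmove`, seeing the pursuers' new positions and his own position). -/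
def gamePlay {V : Type*} {k : ℕ} (binit : Fin k → V) (bmove : (Fin k → V) → V → Fin k → V)
    (pinit : (Fin k → V) → V) (pmove : (Fin k → V) → V → V) : ℕ → (Fin k → V) × V
  | 0 => (binit, pinit binit)
  | n + 1 =>
      let s := gamePlay binit bmove pinit pmove n
      (bmove s.1 s.2, pmove (bmove s.1 s.2) s.2)

/-- `k` bodyguards have a winning strategy on `G`: they can place themselves and move so
that, against every president strategy, after finitely many rounds they occupy the whole
open neighbourhood of the president's vertex at the end of every bodyguard turn. -/
def BodyguardsWin {V : Type*} (G : SimpleGraph V) (k : ℕ) : Prop :=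
  ∃ (binit : Fin k → V) (bmove : (Fin k → V) → V → Fin k → V),
    (∀ bs p i, stepRel G (bs i) (bmove bs p i)) ∧
    ∀ (pinit : (Fin k → V) → V) (pmove : (Fin k → V) → V → V),
      (∀ bs p, stepRel G p (pmove bs p)) →
      ∃ N, ∀ n, N ≤ n →
        ∀ v, G.Adj (gamePlay binit bmove pinit pmove n).2 v →
          ∃ i, (gamePlay binit bmove pinit pmove (n + 1)).1 i = v

/-- The bodyguard number of a finite graph. -/
noncomputable def bodyguardNumber {V : Type*} (G : SimpleGraph V) [Fintype V] : ℕ :=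
  sInf {k | BodyguardsWin G k}

/-- `k` cops have a winning strategy in classic Cops and Robber on `G`: at some point a cop
occupies the same vertex as the robber (either right after a cop move, or at the end of a
round). -/
def CopsWin {V : Type*} (G : SimpleGraph V) (k : ℕ) : Prop :=
  ∃ (cinit : Fin k → V) (cmove : (Fin k → V) → V → Fin k → V),
    (∀ cs r i, stepRel G (cs i) (cmove cs r i)) ∧
    ∀ (rinit : (Fin k → V) → V) (rmove : (Fin k → V) → V → V),
      (∀ cs r, stepRel G r (rmove cs r)) →
      ∃ n i, (gamePlay cinit cmove rinit rmove (n + 1)).1 i =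
                (gamePlay cinit cmove rinit rmove n).2 ∨
             (gamePlay cinit cmove rinit rmove n).1 i =
                (gamePlay cinit cmove rinit rmove n).2

/-- The cop number of a finite graph. -/
noncomputable def copNumber {V : Type*} (G : SimpleGraph V) [Fintype V] : ℕ :=
  sInf {k | CopsWin G k}

/-! ### Strategies from attractors -/

/-- The bodyguards at `bs` occupy the whole open neighbourhood of `p`. -/
def Surrounds {V : Type*} {k : ℕ} (G : SimpleGraph V) (bs : Fin k → V) (p : V) : Prop :=
  ∀ v, G.Adj p v → ∃ i, bs i = v

/-- All bodyguards make a legal move from `bs` to `bs'`. -/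
def TeamStep {V : Type*} {k : ℕ} (G : SimpleGraph V) (bs bs' : Fin k → V) : Prop :=
  ∀ i, stepRel G (bs i) (bs' i)

/-- The positions, with the bodyguards to move, from which they can force the play into `S`. -/
inductive Forces {V : Type*} {k : ℕ} (G : SimpleGraph V) (S : (Fin k → V) → V → Prop) :
    (Fin k → V) → V → Prop
  | base {bs p} : S bs p → Forces G S bs p
  | move {bs p} (bs' : Fin k → V) : TeamStep G bs bs' →
      (∀ p', stepRel G p p' → Forces G S bs' p') → Forces G S bs p

/-- The positions from which the bodyguards can force the play into `S` within `r` rounds. -/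
def ForcesIn {V : Type*} {k : ℕ} (G : SimpleGraph V) (S : (Fin k → V) → V → Prop) :
    ℕ → (Fin k → V) → V → Prop
  | 0, bs, p => S bs p
  | r + 1, bs, p => S bs p ∨
      ∃ bs', TeamStep G bs bs' ∧ ∀ p', stepRel G p p' → ForcesIn G S r bs' p'

lemma ForcesIn.succ {V : Type*} {k : ℕ} {G : SimpleGraph V} {S : (Fin k → V) → V → Prop} {r : ℕ} :
    ∀ {bs p}, ForcesIn G S r bs p → ForcesIn G S (r + 1) bs p := by
  induction r with
  | zero => exact fun h => Or.inl h
  | succ r ih =>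
    rintro bs p (h | ⟨bs', h, h'⟩)
    · exact Or.inl h
    · exact Or.inr ⟨bs', h, fun p' hp => ih (h' p' hp)⟩

lemma ForcesIn.mono {V : Type*} {k : ℕ} {G : SimpleGraph V} {S : (Fin k → V) → V → Prop} {r s : ℕ}
    (hrs : r ≤ s) {bs p} (h : ForcesIn G S r bs p) : ForcesIn G S s bs p := by
  induction hrs with
  | refl => exact h
  | step _ ih => exact ih.succ

lemma Forces.exists_forcesIn {V : Type*} [Finite V] {k : ℕ} {G : SimpleGraph V}
    {S : (Fin k → V) → V → Prop} {bs p} (h : Forces G S bs p) : ∃ r, ForcesIn G S r bs p := by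
  induction h with
  | base h => exact ⟨0, h⟩
  | @move bs p bs' hs _ ih =>
    have ih' : ∀ p', ∃ r, stepRel G p p' → ForcesIn G S r bs' p' := fun p' => by
      by_cases hp : stepRel G p p'
      · exact (ih p' hp).imp fun _ h _ => h
      · exact ⟨0, fun h => absurd h hp⟩
    choose r hr using ih'
    obtain ⟨R, hR⟩ := (Set.finite_range r).bddAbove
    exact ⟨R + 1, Or.inr ⟨bs', hs, fun p' hp => (hr p' hp).mono (hR ⟨p', rfl⟩)⟩⟩

/-- If the bodyguards can protect the president forever from every position in `S`, and can force
`S` from every position, then they win. -/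
theorem bodyguardsWin_of_forces {V : Type*} [Finite V] [Nonempty V] {k : ℕ} {G : SimpleGraph V}
    {S : (Fin k → V) → V → Prop}
    (hS : ∀ bs p, S bs p → ∃ bs', TeamStep G bs bs' ∧ Surrounds G bs' p ∧
      ∀ p', stepRel G p p' → S bs' p')
    (hF : ∀ bs p, Forces G S bs p) : BodyguardsWin G k := by
  classical
  have key : ∀ bs p, ∃ bs', TeamStep G bs bs' ∧
      (S bs p → Surrounds G bs' p ∧ ∀ p', stepRel G p p' → S bs' p') ∧
      ∀ r, ForcesIn G S (r + 1) bs p → ∀ p', stepRel G p p' → ForcesIn G S r bs' p' := by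
    intro bs p
    by_cases h : S bs p
    · obtain ⟨bs', h1, h2, h3⟩ := hS bs p h
      exact ⟨bs', h1, fun _ => ⟨h2, h3⟩,
        fun r _ p' hp => ForcesIn.mono (r := 0) (Nat.zero_le r) (h3 p' hp)⟩
    · have hex := (hF bs p).exists_forcesIn
      have hspec := Nat.find_spec hex
      have hmin : ∀ r, ForcesIn G S r bs p → Nat.find hex ≤ r := fun r hr => Nat.find_min' hex hr
      generalize Nat.find hex = q at hspec hmin
      cases q with
      | zero => exact absurd hspec h
      | succ q =>
        obtain h' | ⟨bs', h1, h2⟩ := hspec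
        · exact absurd h' h
        · exact ⟨bs', h1, fun h' => absurd h' h,
            fun r hr p' hp => (h2 p' hp).mono (by have := hmin _ hr; omega)⟩
  choose bmove h1 h2 h3 using key
  refine ⟨fun _ => Classical.arbitrary V, bmove, h1, fun pinit pmove hp => ?_⟩
  set g := gamePlay (fun _ => Classical.arbitrary V) bmove pinit pmove
  have g1 : ∀ t, (g (t + 1)).1 = bmove (g t).1 (g t).2 := fun t => rfl
  have g2 : ∀ t, stepRel G (g t).2 (g (t + 1)).2 := fun t => hp _ _
  obtain ⟨R, hR⟩ := (hF (g 0).1 (g 0).2).exists_forcesIn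
  have hdown : ∀ t r, r + t = R → ForcesIn G S r (g t).1 (g t).2 := by
    intro t
    induction t with
    | zero => rintro r rfl; exact hR
    | succ t ih =>
      intro r hr
      rw [g1]
      exact h3 _ _ r (ih (r + 1) (by omega)) _ (g2 t)
  have hstay : ∀ t, R ≤ t → S (g t).1 (g t).2 := by
    intro t ht
    induction t, ht using Nat.le_induction with
    | base => exact hdown R 0 (by omega)
    | succ t _ ih => rw [g1]; exact (h2 _ _ ih).2 _ (g2 t)
  exact ⟨R, fun t ht v hv => by rw [g1]; exact (h2 _ _ (hstay t ht)).1 v hv⟩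

/-! ### Chasing several shadows of the president -/

/-- Two cops at `a` and `b`, to move, can force one of them next to (or onto) the robber `r`. -/
inductive TwoCopsCatch {V : Type*} (G : SimpleGraph V) : V → V → V → Prop
  | left {a b r} : stepRel G a r → TwoCopsCatch G a b r
  | right {a b r} : stepRel G b r → TwoCopsCatch G a b r
  | move {a b r} (a' b' : V) : stepRel G a a' → stepRel G b b' →
      (∀ r', stepRel G r r' → TwoCopsCatch G a' b' r') → TwoCopsCatch G a b r

/-- Each of the first `j` shadows can be reached in one move by its own bodyguard. -/
def Shadowed {V : Type*} (G : SimpleGraph V) {d : ℕ} (tgt : Fin d → V → V) (j : ℕ)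
    (bs : Fin (d + 1) → V) (p : V) : Prop :=
  ∃ f : Equiv.Perm (Fin (d + 1)), ∀ t : Fin d, t.val < j → stepRel G (bs (f t.castSucc)) (tgt t p)

lemma forces_shadowed_succ {V : Type*} {G : SimpleGraph V} {d : ℕ} {tgt : Fin d → V → V}
    (hstep : ∀ t p p', stepRel G p p' → stepRel G (tgt t p) (tgt t p'))
    {S : (Fin (d + 1) → V) → V → Prop} (j : Fin d)
    (hS : ∀ bs p, Shadowed G tgt (j + 1) bs p → Forces G S bs p)
    {a b r : V} (h : TwoCopsCatch G a b r) :
    ∀ (bs : Fin (d + 1) → V) (p : V) (f : Equiv.Perm (Fin (d + 1))),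
      (∀ t : Fin d, t.val < j.val → stepRel G (bs (f t.castSucc)) (tgt t p)) →
      bs (f j.castSucc) = a → bs (f (Fin.last d)) = b → tgt j p = r → Forces G S bs p := by
  induction h with
  | left h =>
    rintro bs p f hf rfl rfl rfl
    refine hS bs p ⟨f, fun t ht => ?_⟩
    obtain h' | h' := Nat.lt_succ_iff_lt_or_eq.1 ht
    · exact hf t h'
    · obtain rfl := Fin.ext h'
      exact h
  | right h =>
    rintro bs p f hf rfl rfl rfl
    refine hS bs p ⟨(Equiv.swap j.castSucc (Fin.last d)).trans f, fun t ht => ?_⟩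
    obtain h' | h' := Nat.lt_succ_iff_lt_or_eq.1 ht
    · have h1 : t.castSucc ≠ j.castSucc := fun e => by
        have := Fin.castSucc_injective _ e
        subst this
        exact lt_irrefl _ h'
      simpa [Equiv.swap_apply_of_ne_of_ne h1 (Fin.castSucc_lt_last t).ne] using hf t h'
    · obtain rfl := Fin.ext h'
      simpa using h
  | @move a b r a' b' ha hb _ ih =>
    rintro bs p f hf rfl rfl rfl
    classical
    obtain ⟨c, hc, hc'⟩ : ∃ c : Fin (d + 1) → V, (∀ t : Fin d, c (f t.castSucc) =
        if t.val < j.val then tgt t p else if t = j then a' else bs (f t.castSucc)) ∧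
        c (f (Fin.last d)) = b' :=
      ⟨fun i => Fin.lastCases (motive := fun _ => V) b' (fun t =>
        if t.val < j.val then tgt t p else if t = j then a' else bs (f t.castSucc)) (f.symm i),
        by simp, by simp⟩
    refine Forces.move c (fun i => ?_) (fun p' hp => ?_)
    · obtain ⟨i, rfl⟩ := f.surjective i
      induction i using Fin.lastCases with
      | last => rwa [hc']
      | cast t =>
        rw [hc]
        split_ifs with h1 h2
        · exact hf t h1
        · subst h2; exact ha
        · exact Or.inl rfl
    · refine ih (tgt j p') (hstep j p p' hp) c p' f (fun t ht => ?_) ?_ hc' rfl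
      · rw [hc, if_pos ht]
        exact hstep t p p' hp
      · rw [hc, if_neg (lt_irrefl _), if_pos rfl]

/-- If two cops can catch a robber and every open neighbourhood is covered by the images of the
president under `d` nonexpansive maps, then `d + 1` bodyguards win. -/
theorem bodyguardsWin_of_shadows {V : Type*} [Finite V] [Nonempty V] {G : SimpleGraph V} {d : ℕ}
    (tgt : Fin d → V → V)
    (hstep : ∀ t p p', stepRel G p p' → stepRel G (tgt t p) (tgt t p'))
    (hcover : ∀ p v, G.Adj p v → ∃ t, tgt t p = v)
    (hcatch : ∀ a b r, TwoCopsCatch G a b r) : BodyguardsWin G (d + 1) := by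
  refine bodyguardsWin_of_forces (S := Shadowed G tgt d) ?_ ?_
  · rintro bs p ⟨f, hf⟩
    obtain ⟨c, hc, hc'⟩ : ∃ c : Fin (d + 1) → V, (∀ t : Fin d, c (f t.castSucc) = tgt t p) ∧
        c (f (Fin.last d)) = bs (f (Fin.last d)) :=
      ⟨fun i => Fin.lastCases (motive := fun _ => V) (bs (f (Fin.last d))) (fun t => tgt t p)
        (f.symm i), by simp, by simp⟩
    refine ⟨c, fun i => ?_, fun v hv => ?_, fun p' hp => ⟨f, fun t _ => ?_⟩⟩
    · obtain ⟨i, rfl⟩ := f.surjective i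
      induction i using Fin.lastCases with
      | last => exact Or.inl hc'.symm
      | cast t => rw [hc]; exact hf t t.2
    · obtain ⟨t, rfl⟩ := hcover p v hv
      exact ⟨f t.castSucc, hc t⟩
    · rw [hc]
      exact hstep t p p' hp
  · have main : ∀ e j, e + j = d → ∀ bs p, Shadowed G tgt j bs p →
        Forces G (Shadowed G tgt d) bs p := by
      intro e
      induction e with
      | zero =>
        rintro j hj bs p h
        obtain rfl : j = d := by omega
        exact Forces.base h
      | succ e ih =>
        rintro j hj bs p ⟨f, hf⟩
        exact forces_shadowed_succ hstep ⟨j, by omega⟩ (ih (j + 1) (by omega))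
          (hcatch _ _ _) bs p f hf rfl rfl rfl
    exact fun bs p => main d 0 (by omega) bs p ⟨1, fun t ht => absurd ht (Nat.not_lt_zero _)⟩

/-! ### Two cops on a grid -/

lemma gridAdj_iff {n m : ℕ} (x y : Fin n × Fin m) :
    (pathGraph n □ pathGraph m).Adj x y ↔
      ((x.1.val + 1 = y.1.val ∨ y.1.val + 1 = x.1.val) ∧ x.2.val = y.2.val) ∨
      ((x.2.val + 1 = y.2.val ∨ y.2.val + 1 = x.2.val) ∧ x.1.val = y.1.val) := by
  simp [boxProd_adj, pathGraph_adj, Fin.ext_iff]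

lemma gridStep_iff {n m : ℕ} (x y : Fin n × Fin m) :
    stepRel (pathGraph n □ pathGraph m) x y ↔
      (x.1.val = y.1.val ∧ x.2.val ≤ y.2.val + 1 ∧ y.2.val ≤ x.2.val + 1) ∨
      (x.2.val = y.2.val ∧ x.1.val ≤ y.1.val + 1 ∧ y.1.val ≤ x.1.val + 1) := by
  rw [stepRel, gridAdj_iff, Prod.ext_iff, Fin.ext_iff, Fin.ext_iff]
  omega

/-- A cop in (or next to) the robber's column below him and one in (or next to) his row to the
left of him catch him. -/
lemma twoCopsCatch_aligned {n m : ℕ} (μ : ℕ) : ∀ a b r : Fin n × Fin m,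
    a.1.val ≤ r.1.val + 1 → r.1.val ≤ a.1.val + 1 → a.2.val ≤ r.2.val →
    b.2.val ≤ r.2.val + 1 → r.2.val ≤ b.2.val + 1 → b.1.val ≤ r.1.val →
    (m - a.2.val) + (n - b.1.val) + 1 ≤ μ ∨
      (a.1.val = r.1.val ∨ b.2.val = r.2.val) ∧ (m - a.2.val) + (n - b.1.val) ≤ μ →
    TwoCopsCatch (pathGraph n □ pathGraph m) a b r := by
  induction μ with
  | zero => intro a b r; have := a.2.2; omega
  | succ μ ih =>
    intro a b r h1 h2 h3 h4 h5 h6 hμ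
    by_cases ha : stepRel (pathGraph n □ pathGraph m) a r
    · exact .left ha
    by_cases hb : stepRel (pathGraph n □ pathGraph m) b r
    · exact .right hb
    rw [gridStep_iff] at ha hb
    have hr1 := r.1.2
    have hr2 := r.2.2
    obtain ⟨a', ea, ea'⟩ : ∃ a' : Fin n × Fin m, a'.1.val = r.1.val ∧
        (a.1.val = r.1.val ∧ a'.2.val = a.2.val + 1 ∨
          a.1.val ≠ r.1.val ∧ a'.2.val = a.2.val) := by
      by_cases h : a.1.val = r.1.val
      · exact ⟨(a.1, ⟨a.2.val + 1, by omega⟩), h, Or.inl ⟨h, rfl⟩⟩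
      · exact ⟨(r.1, a.2), rfl, Or.inr ⟨h, rfl⟩⟩
    obtain ⟨b', eb, eb'⟩ : ∃ b' : Fin n × Fin m, b'.2.val = r.2.val ∧
        (b.2.val = r.2.val ∧ b'.1.val = b.1.val + 1 ∨
          b.2.val ≠ r.2.val ∧ b'.1.val = b.1.val) := by
      by_cases h : b.2.val = r.2.val
      · exact ⟨(⟨b.1.val + 1, by omega⟩, b.2), h, Or.inl ⟨h, rfl⟩⟩
      · exact ⟨(b.1, r.2), rfl, Or.inr ⟨h, rfl⟩⟩
    refine .move a' b' ?_ ?_ fun r' hr => ?_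
    · rw [gridStep_iff]; omega
    · rw [gridStep_iff]; omega
    · by_cases ha2 : stepRel (pathGraph n □ pathGraph m) a' r'
      · exact .left ha2
      by_cases hb2 : stepRel (pathGraph n □ pathGraph m) b' r'
      · exact .right hb2
      rw [gridStep_iff] at ha2 hb2 hr
      apply ih <;> omega

/-- A cop on the bottom side left of the robber and one on the left side below him catch him. -/
lemma twoCopsCatch_sides {n m : ℕ} (μ : ℕ) : ∀ a b r : Fin n × Fin m,
    a.1.val ≤ r.1.val + 1 → a.2.val = 0 → b.2.val ≤ r.2.val + 1 → b.1.val = 0 →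
    (if r.1.val ≤ a.1.val + 1 then 0 else n - a.1.val) +
      (if r.2.val ≤ b.2.val + 1 then 0 else m - b.2.val) ≤ μ →
    TwoCopsCatch (pathGraph n □ pathGraph m) a b r := by
  induction μ with
  | zero =>
    intro a b r h1 h2 h3 h4 hμ
    have := a.1.2
    have := b.2.2
    apply twoCopsCatch_aligned _ a b r _ _ _ _ _ _ (Or.inl le_rfl) <;> split_ifs at * <;> omega
  | succ μ ih =>
    intro a b r h1 h2 h3 h4 hμ
    have hr1 := r.1.2
    have hr2 := r.2.2
    by_cases hal : r.1.val ≤ a.1.val + 1 ∧ r.2.val ≤ b.2.val + 1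
    · apply twoCopsCatch_aligned _ a b r _ _ _ _ _ _ (Or.inl le_rfl) <;> omega
    refine .move (⟨min (a.1.val + 1) r.1.val, by omega⟩, a.2)
      (b.1, ⟨min (b.2.val + 1) r.2.val, by omega⟩) ?_ ?_ ?_
    · rw [gridStep_iff]; dsimp only; omega
    · rw [gridStep_iff]; dsimp only; omega
    · intro r' hr
      rw [gridStep_iff] at hr
      apply ih <;> dsimp only <;> split_ifs at * <;> omega

theorem twoCopsCatch_grid {n m : ℕ} (a b r : Fin n × Fin m) :
    TwoCopsCatch (pathGraph n □ pathGraph m) a b r := by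
  suffices H : ∀ (μ : ℕ) (a b r : Fin n × Fin m),
      a.1.val + a.2.val + b.1.val + b.2.val ≤ μ →
      TwoCopsCatch (pathGraph n □ pathGraph m) a b r from H _ a b r le_rfl
  intro μ
  induction μ with
  | zero =>
    intro a b r h
    apply twoCopsCatch_sides _ a b r _ _ _ _ le_rfl <;> omega
  | succ μ ih =>
    intro a b r h
    by_cases h0 : a.1.val + a.2.val + b.1.val + b.2.val = 0
    · exact ih a b r (by omega)
    refine .move
      (⟨a.1.val - 1, by omega⟩,
        ⟨if a.1.val = 0 then a.2.val - 1 else a.2.val, by split_ifs <;> omega⟩)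
      (⟨b.1.val - 1, by omega⟩,
        ⟨if b.1.val = 0 then b.2.val - 1 else b.2.val, by split_ifs <;> omega⟩)
      ?_ ?_ ?_
    · rw [gridStep_iff]; dsimp only; split_ifs <;> omega
    · rw [gridStep_iff]; dsimp only; split_ifs <;> omega
    · intro r' _
      apply ih
      dsimp only
      split_ifs <;> omega

/-- The grid neighbours of a vertex in the four directions, clamped to the grid. -/
def gridShadow (n m : ℕ) (t : Fin 4) (p : Fin n × Fin m) : Fin n × Fin m :=
  match t with
  | 0 => (⟨min (p.1.val + 1) (n - 1), by omega⟩, p.2)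
  | 1 => (⟨p.1.val - 1, by omega⟩, p.2)
  | 2 => (p.1, ⟨min (p.2.val + 1) (m - 1), by omega⟩)
  | 3 => (p.1, ⟨p.2.val - 1, by omega⟩)

theorem bodyguardsWin_grid_five {n m : ℕ} (hn : 0 < n) (hm : 0 < m) :
    BodyguardsWin (pathGraph n □ pathGraph m) 5 := by
  have : Nonempty (Fin n × Fin m) := ⟨(⟨0, hn⟩, ⟨0, hm⟩)⟩
  refine bodyguardsWin_of_shadows (gridShadow n m) ?_ ?_ twoCopsCatch_grid
  · intro t p p' h
    rw [gridStep_iff] at h ⊢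
    fin_cases t <;> dsimp [gridShadow] <;> omega
  · intro p v h
    rw [gridAdj_iff] at h
    have := v.1.2
    have := v.2.2
    obtain ⟨h | h, h'⟩ | ⟨h | h, h'⟩ := h
    · exact ⟨0, Prod.ext (Fin.ext (by dsimp [gridShadow]; omega)) (Fin.ext h')⟩
    · exact ⟨1, Prod.ext (Fin.ext (by dsimp [gridShadow]; omega)) (Fin.ext h')⟩
    · exact ⟨2, Prod.ext (Fin.ext h') (Fin.ext (by dsimp [gridShadow]; omega))⟩
    · exact ⟨3, Prod.ext (Fin.ext h') (Fin.ext (by dsimp [gridShadow]; omega))⟩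

/-! ### Evading four bodyguards -/

/-- If, from a region `I`, an unprotected president can always move inside `I` to a vertex whose
neighbourhood the bodyguards cannot occupy in one move, then the bodyguards do not win. -/
theorem not_bodyguardsWin_of_evasion {V : Type*} {k : ℕ} {G : SimpleGraph V} (I : V → Prop)
    (hinit : ∀ bs : Fin k → V, ∃ p, I p ∧ ¬ Surrounds G bs p)
    (hmove : ∀ (bs : Fin k → V) p, I p → ¬ Surrounds G bs p →
      ∃ p', stepRel G p p' ∧ I p' ∧ ∀ bs', TeamStep G bs bs' → ¬ Surrounds G bs' p') :
    ¬ BodyguardsWin G k := by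
  classical
  rintro ⟨binit, bmove, hb, hwin⟩
  choose p₀ hp₀ hp₀' using hinit
  choose q hq1 hq2 hq3 using hmove
  obtain ⟨N, hN⟩ := hwin (fun bs => q bs (p₀ bs) (hp₀ bs) (hp₀' bs))
    (fun bs p => if h : I p ∧ ¬ Surrounds G bs p then q bs p h.1 h.2 else p)
    (fun bs p => by
      split_ifs with h
      · exact hq1 _ _ _ _
      · exact Or.inl rfl)
  set g := gamePlay binit bmove (fun bs => q bs (p₀ bs) (hp₀ bs) (hp₀' bs))
    (fun bs p => if h : I p ∧ ¬ Surrounds G bs p then q bs p h.1 h.2 else p)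
  have g1 : ∀ t, (g (t + 1)).1 = bmove (g t).1 (g t).2 := fun t => rfl
  have g2 : ∀ t, (g (t + 1)).2 = if h : I (g t).2 ∧ ¬ Surrounds G (g (t + 1)).1 (g t).2 then
      q (g (t + 1)).1 (g t).2 h.1 h.2 else (g t).2 := fun t => rfl
  have inv : ∀ t, I (g t).2 ∧ ∀ bs', TeamStep G (g t).1 bs' → ¬ Surrounds G bs' (g t).2 := by
    intro t
    induction t with
    | zero => exact ⟨hq2 _ _ _ _, hq3 _ _ _ _⟩
    | succ t ih =>
      have h : I (g t).2 ∧ ¬ Surrounds G (g (t + 1)).1 (g t).2 := by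
        refine ⟨ih.1, ih.2 _ ?_⟩
        rw [g1]
        exact hb _ _
      rw [g2, dif_pos h]
      exact ⟨hq2 _ _ _ _, hq3 _ _ _ _⟩
  refine (inv N).2 _ ?_ (hN N le_rfl)
  rw [g1]
  exact hb _ _

/-- The integer points `(x, y)` and `(a, b)` are at `ℓ¹`-distance at most `1`. -/
def Near (x y a b : ℤ) : Prop :=
  (x = a ∧ y ≤ b + 1 ∧ b ≤ y + 1) ∨ (y = b ∧ x ≤ a + 1 ∧ a ≤ x + 1)

/-- Distinct points of the family `(X, Y)` are near the four lattice neighbours of `(a, b)`. -/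
def CanSurround {ι : Type*} (X Y : ι → ℤ) (a b : ℤ) : Prop :=
  ∃ e w n s : ι, (e ≠ w ∧ e ≠ n ∧ e ≠ s ∧ w ≠ n ∧ w ≠ s ∧ n ≠ s) ∧
    Near (X e) (Y e) (a + 1) b ∧ Near (X w) (Y w) (a - 1) b ∧
    Near (X n) (Y n) a (b + 1) ∧ Near (X s) (Y s) a (b - 1)

lemma eq_or_of_four_ne {k : ℕ} (hk : k ≤ 4) (e w n s : Fin k)
    (h : e ≠ w ∧ e ≠ n ∧ e ≠ s ∧ w ≠ n ∧ w ≠ s ∧ n ≠ s) (i : Fin k) :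
    i = e ∨ i = w ∨ i = n ∨ i = s := by
  omega

/-- At most four points that can surround the origin, its right and its upper neighbour already
occupy the four neighbours of the origin. -/
lemma surrounded_of_canSurround {ι : Type*}
    (hι : ∀ e w n s : ι, e ≠ w ∧ e ≠ n ∧ e ≠ s ∧ w ≠ n ∧ w ≠ s ∧ n ≠ s →
      ∀ i, i = e ∨ i = w ∨ i = n ∨ i = s) {X Y : ι → ℤ}
    (h₀ : CanSurround X Y 0 0) (h₁ : CanSurround X Y 1 0) (h₂ : CanSurround X Y 0 1) :
    (∃ i, X i = 1 ∧ Y i = 0) ∧ (∃ i, X i = -1 ∧ Y i = 0) ∧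
      (∃ i, X i = 0 ∧ Y i = 1) ∧ (∃ i, X i = 0 ∧ Y i = -1) := by
  obtain ⟨e, w, n, s, hd, he, hw, hn, hs⟩ := h₀
  obtain ⟨e', w', n', s', hd', he', hw', hn', hs'⟩ := h₁
  obtain ⟨e'', w'', n'', s'', hd'', he'', hw'', hn'', hs''⟩ := h₂
  have c := hι _ _ _ _ hd
  have c' : ∀ i, Near (X i) (Y i) 2 0 ∧ i = e' ∨ Near (X i) (Y i) 0 0 ∨
      Near (X i) (Y i) 1 1 ∨ Near (X i) (Y i) 1 (-1) := fun i => by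
    obtain rfl | rfl | rfl | rfl := hι _ _ _ _ hd' i
    · exact Or.inl ⟨he', rfl⟩
    · exact Or.inr (Or.inl hw')
    · exact Or.inr (Or.inr (Or.inl hn'))
    · exact Or.inr (Or.inr (Or.inr hs'))
  have c'' : ∀ i, Near (X i) (Y i) 0 2 ∧ i = n'' ∨ Near (X i) (Y i) 0 0 ∨
      Near (X i) (Y i) 1 1 ∨ Near (X i) (Y i) (-1) 1 := fun i => by
    obtain rfl | rfl | rfl | rfl := hι _ _ _ _ hd'' i
    · exact Or.inr (Or.inr (Or.inl he''))
    · exact Or.inr (Or.inr (Or.inr hw''))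
    · exact Or.inl ⟨hn'', rfl⟩
    · exact Or.inr (Or.inl hs'')
  simp only [Near] at *
  clear hn' hw' he'' hs''
  have kw : Y w = 0 ∧ (X w = 0 ∨ X w = -1) := by
    clear he hn hs he' hs' hn'' hw''
    have := c' w
    omega
  have ks : X s = 0 ∧ (Y s = 0 ∨ Y s = -1) := by
    clear he hn hw he' hs' hn'' hw''
    have := c'' s
    omega
  clear hw hs
  obtain rfl : e = e' := by
    clear hs' hn'' hw''
    rcases c e' with rfl | rfl | rfl | rfl
    · rfl
    all_goals omega
  obtain rfl : n = n'' := by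
    clear hs' he' hw''
    rcases c n'' with rfl | rfl | rfl | rfl
    pick_goal 3
    · rfl
    all_goals omega
  have kn : X n = 0 ∧ Y n = 1 := by
    clear hs' hw'' he he'
    obtain ⟨-, h⟩ | h := c' n
    · exact absurd h.symm hd.2.1
    · omega
  have ke : X e = 1 ∧ Y e = 0 := by
    clear hs' hw'' hn hn''
    obtain ⟨-, h⟩ | h := c'' e
    · exact absurd h hd.2.1
    · omega
  clear he hn he' hn''
  have ls : X s = 0 ∧ Y s = -1 := by
    clear hw''
    obtain h | rfl | rfl | rfl := c s'
    · exact absurd h.symm hd'.2.2.1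
    all_goals omega
  have lw : X w = -1 ∧ Y w = 0 := by
    clear hs'
    obtain rfl | rfl | h | rfl := c w''
    pick_goal 3
    · exact absurd h hd''.2.2.2.1
    all_goals omega
  exact ⟨⟨e, ke⟩, ⟨w, lw⟩, ⟨n, kn⟩, ⟨s, ls⟩⟩

/-- A vertex of the grid that is not on the boundary. -/
def GridInterior {n m : ℕ} (p : Fin n × Fin m) : Prop :=
  0 < p.1.val ∧ p.1.val + 1 < n ∧ 0 < p.2.val ∧ p.2.val + 1 < m

lemma surrounds_interior_iff {n m k : ℕ} {bs : Fin k → Fin n × Fin m} {p : Fin n × Fin m}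
    (hp : GridInterior p) : Surrounds (pathGraph n □ pathGraph m) bs p ↔
      (∃ i, (bs i).1.val = p.1.val + 1 ∧ (bs i).2.val = p.2.val) ∧
      (∃ i, (bs i).1.val + 1 = p.1.val ∧ (bs i).2.val = p.2.val) ∧
      (∃ i, (bs i).1.val = p.1.val ∧ (bs i).2.val = p.2.val + 1) ∧
      (∃ i, (bs i).1.val = p.1.val ∧ (bs i).2.val + 1 = p.2.val) := by
  obtain ⟨h1, h2, h3, h4⟩ := hp
  constructor
  · intro h
    refine ⟨?_, ?_, ?_, ?_⟩
    · obtain ⟨i, hi⟩ := h (⟨p.1.val + 1, by omega⟩, p.2) (by rw [gridAdj_iff]; simp)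
      exact ⟨i, by rw [hi]; simp⟩
    · obtain ⟨i, hi⟩ := h (⟨p.1.val - 1, by omega⟩, p.2) (by rw [gridAdj_iff]; dsimp only; omega)
      exact ⟨i, by rw [hi]; dsimp only; omega⟩
    · obtain ⟨i, hi⟩ := h (p.1, ⟨p.2.val + 1, by omega⟩) (by rw [gridAdj_iff]; simp)
      exact ⟨i, by rw [hi]; simp⟩
    · obtain ⟨i, hi⟩ := h (p.1, ⟨p.2.val - 1, by omega⟩) (by rw [gridAdj_iff]; dsimp only; omega)
      exact ⟨i, by rw [hi]; dsimp only; omega⟩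
  · rintro ⟨⟨e, he⟩, ⟨w, hw⟩, ⟨n, hn⟩, ⟨s, hs⟩⟩ v hv
    rw [gridAdj_iff] at hv
    obtain ⟨hv | hv, hv'⟩ | ⟨hv | hv, hv'⟩ := hv
    · exact ⟨e, Prod.ext (Fin.ext (by omega)) (Fin.ext (by omega))⟩
    · exact ⟨w, Prod.ext (Fin.ext (by omega)) (Fin.ext (by omega))⟩
    · exact ⟨n, Prod.ext (Fin.ext (by omega)) (Fin.ext (by omega))⟩
    · exact ⟨s, Prod.ext (Fin.ext (by omega)) (Fin.ext (by omega))⟩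

/-- Bodyguards that can surround `q` in one move do so in coordinates centred at `p` and reflected
by the signs `σ`, `τ`. -/
lemma canSurround_of_teamStep {n m k : ℕ} {bs bs' : Fin k → Fin n × Fin m} {p q : Fin n × Fin m}
    (hq : GridInterior q) (hstep : TeamStep (pathGraph n □ pathGraph m) bs bs')
    (hs : Surrounds (pathGraph n □ pathGraph m) bs' q) {σ τ : ℤ} (hσ : σ = 1 ∨ σ = -1)
    (hτ : τ = 1 ∨ τ = -1) :
    CanSurround (fun i => σ * ((bs i).1.val - p.1.val : ℤ))
      (fun i => τ * ((bs i).2.val - p.2.val : ℤ))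
      (σ * (q.1.val - p.1.val : ℤ)) (τ * (q.2.val - p.2.val : ℤ)) := by
  rw [surrounds_interior_iff hq] at hs
  obtain ⟨⟨e, he⟩, ⟨w, hw⟩, ⟨u, hu⟩, ⟨s, hs⟩⟩ := hs
  have ne : ∀ {i j}, ((bs' i).1.val ≠ (bs' j).1.val ∨ (bs' i).2.val ≠ (bs' j).2.val) → i ≠ j := by
    rintro i j h rfl
    omega
  have d1 : e ≠ w := ne (by omega)
  have d2 : e ≠ u := ne (by omega)
  have d3 : e ≠ s := ne (by omega)
  have d4 : w ≠ u := ne (by omega)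
  have d5 : w ≠ s := ne (by omega)
  have d6 : u ≠ s := ne (by omega)
  have near : ∀ i (a b : ℤ), (bs' i).1.val = q.1.val + a → (bs' i).2.val = q.2.val + b →
      Near (σ * ((bs i).1.val - p.1.val)) (τ * ((bs i).2.val - p.2.val))
        (σ * (q.1.val - p.1.val) + σ * a) (τ * (q.2.val - p.2.val) + τ * b) := by
    clear he hw hu hs d1 d2 d3 d4 d5 d6
    intro i a b ha hb
    have h := (gridStep_iff _ _).1 (hstep i)
    simp only [Near]
    obtain rfl | rfl := hσ <;> obtain rfl | rfl := hτ <;> omega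
  have ne := near e 1 0 (by omega) (by omega)
  have nw := near w (-1) 0 (by omega) (by omega)
  have nu := near u 0 1 (by omega) (by omega)
  have ns := near s 0 (-1) (by omega) (by omega)
  obtain rfl | rfl := hσ <;> obtain rfl | rfl := hτ
  · refine ⟨e, w, u, s, ⟨d1, d2, d3, d4, d5, d6⟩, ?_, ?_, ?_, ?_⟩
    · convert ne using 1 <;> ring
    · convert nw using 1 <;> ring
    · convert nu using 1 <;> ring
    · convert ns using 1 <;> ring
  · refine ⟨e, w, s, u, ⟨d1, d3, d2, d5, d4, d6.symm⟩, ?_, ?_, ?_, ?_⟩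
    · convert ne using 1 <;> ring
    · convert nw using 1 <;> ring
    · convert ns using 1 <;> ring
    · convert nu using 1 <;> ring
  · refine ⟨w, e, u, s, ⟨d1.symm, d4, d5, d2, d3, d6⟩, ?_, ?_, ?_, ?_⟩
    · convert nw using 1 <;> ring
    · convert ne using 1 <;> ring
    · convert nu using 1 <;> ring
    · convert ns using 1 <;> ring
  · refine ⟨w, e, s, u, ⟨d1.symm, d5, d4, d3, d2, d6.symm⟩, ?_, ?_, ?_, ?_⟩
    · convert nw using 1 <;> ring
    · convert ne using 1 <;> ring
    · convert ns using 1 <;> ring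
    · convert nu using 1 <;> ring

theorem not_bodyguardsWin_grid {n m k : ℕ} (hn : 4 ≤ n) (hm : 4 ≤ m) (hk : k ≤ 4) :
    ¬ BodyguardsWin (pathGraph n □ pathGraph m) k := by
  refine not_bodyguardsWin_of_evasion GridInterior (fun bs => ?_) (fun bs p hp hs => ?_)
  · by_contra! h
    have h1 : GridInterior ((⟨1, by omega⟩, ⟨1, by omega⟩) : Fin n × Fin m) := by
      simp only [GridInterior]; omega
    have h2 : GridInterior ((⟨1, by omega⟩, ⟨2, by omega⟩) : Fin n × Fin m) := by
      simp only [GridInterior]; omega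
    obtain ⟨⟨e, he⟩, ⟨w, hw⟩, ⟨u, hu⟩, ⟨s, hs⟩⟩ := (surrounds_interior_iff h1).1 (h _ h1)
    obtain ⟨-, -, ⟨v, hv⟩, -⟩ := (surrounds_interior_iff h2).1 (h _ h2)
    dsimp only at he hw hu hs hv
    have ne : ∀ {i j}, ((bs i).1.val ≠ (bs j).1.val ∨ (bs i).2.val ≠ (bs j).2.val) → i ≠ j := by
      rintro i j h rfl
      omega
    obtain rfl | rfl | rfl | rfl := eq_or_of_four_ne hk e w u s
      ⟨ne (by omega), ne (by omega), ne (by omega), ne (by omega), ne (by omega), ne (by omega)⟩ v <;>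
      omega
  · by_contra! h
    obtain ⟨i1, i2, i3, i4⟩ := id hp
    obtain ⟨σ, hσ, x, hx, hx'⟩ : ∃ σ : ℤ, (σ = 1 ∨ σ = -1) ∧ ∃ x : Fin n,
        (x.val : ℤ) = p.1.val + σ ∧ 0 < x.val ∧ x.val + 1 < n := by
      by_cases hx : p.1.val = 1
      · exact ⟨1, by simp, ⟨p.1.val + 1, by omega⟩, by push_cast; omega, by dsimp only; omega⟩
      · exact ⟨-1, by simp, ⟨p.1.val - 1, by omega⟩, by dsimp only; omega, by dsimp only; omega⟩
    obtain ⟨τ, hτ, y, hy, hy'⟩ : ∃ τ : ℤ, (τ = 1 ∨ τ = -1) ∧ ∃ y : Fin m,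
        (y.val : ℤ) = p.2.val + τ ∧ 0 < y.val ∧ y.val + 1 < m := by
      by_cases hy : p.2.val = 1
      · exact ⟨1, by simp, ⟨p.2.val + 1, by omega⟩, by push_cast; omega, by dsimp only; omega⟩
      · exact ⟨-1, by simp, ⟨p.2.val - 1, by omega⟩, by dsimp only; omega, by dsimp only; omega⟩
    have hp₁ : GridInterior (x, p.2) := ⟨hx'.1, hx'.2, i3, i4⟩
    have hp₂ : GridInterior (p.1, y) := ⟨i1, i2, hy'.1, hy'.2⟩
    obtain ⟨bs₀, s₀, t₀⟩ := h p (Or.inl rfl) hp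
    obtain ⟨bs₁, s₁, t₁⟩ := h (x, p.2) (by rw [gridStep_iff]; dsimp only; omega) hp₁
    obtain ⟨bs₂, s₂, t₂⟩ := h (p.1, y) (by rw [gridStep_iff]; dsimp only; omega) hp₂
    have c₀ := canSurround_of_teamStep (p := p) hp s₀ t₀ hσ hτ
    have c₁ := canSurround_of_teamStep (p := p) hp₁ s₁ t₁ hσ hτ
    have c₂ := canSurround_of_teamStep (p := p) hp₂ s₂ t₂ hσ hτ
    have eσ : σ * σ = 1 := by obtain rfl | rfl := hσ <;> norm_num
    have eτ : τ * τ = 1 := by obtain rfl | rfl := hτ <;> norm_num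
    simp only [hx, hy, sub_self, mul_zero, add_sub_cancel_left, eσ, eτ] at c₀ c₁ c₂
    obtain ⟨⟨e, he⟩, ⟨w, hw⟩, ⟨u, hu⟩, ⟨s, hs'⟩⟩ := surrounded_of_canSurround
      (eq_or_of_four_ne hk) c₀ c₁ c₂
    refine hs ((surrounds_interior_iff hp).2 ?_)
    obtain rfl | rfl := hσ <;> obtain rfl | rfl := hτ
    · exact ⟨⟨e, by omega⟩, ⟨w, by omega⟩, ⟨u, by omega⟩, ⟨s, by omega⟩⟩
    · exact ⟨⟨e, by omega⟩, ⟨w, by omega⟩, ⟨s, by omega⟩, ⟨u, by omega⟩⟩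
    · exact ⟨⟨w, by omega⟩, ⟨e, by omega⟩, ⟨u, by omega⟩, ⟨s, by omega⟩⟩
    · exact ⟨⟨w, by omega⟩, ⟨e, by omega⟩, ⟨s, by omega⟩, ⟨u, by omega⟩⟩

/-- For `m ≥ n ≥ 4`, `B(P_n □ P_m) = 5`. -/
theorem bodyguardNumber_grid (n m : ℕ) (hn : 4 ≤ n) (hm : n ≤ m) :
    bodyguardNumber (SimpleGraph.pathGraph n □ SimpleGraph.pathGraph m) = 5 := by
  refine le_antisymm (Nat.sInf_le (bodyguardsWin_grid_five (by omega) (by omega))) ?_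
  refine le_csInf ⟨5, bodyguardsWin_grid_five (by omega) (by omega)⟩ fun k hk => ?_
  by_contra h
  exact not_bodyguardsWin_grid hn (by omega) (by omega) hk
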